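/- Let n = Δ·s with Δ, s positive integers, 0 ≤ t_d ≤ Δ−1, P_x > 0, γ > 0, σ_x² = P_x/n, and consider the static channel (h_t = 1). For equidistant-sampling allocations, the error equals ērr(ā) = Σ_{r=0}^{s−1} (P_x/s)/(1 + γ σ_x² ā_r) for ā ∈ ℝ^s with nonnegative entries, and ērr is Schur-convex: if ā ≺ b̄ with ā, b̄ entrywise nonnegative then ērr(ā) ≤ ērr(b̄). Consequently, any equidistant allocation ā* that satisfies the induced energy causality constraints and is majorized by every allocation satisfying them minimizes ērr among all such allocations (the most majorized, i.e. most balanced, feasible power allocation over the s transmitted samples is optimal). -/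

import Mathlib

/-- `a` is majorized by `b` (written `a ≺ b`): for every `k`, the sum of the `k`
largest entries of `a` is at most the sum of the `k` largest entries of `b`,
and the total sums agree. -/
def Majorizes {s : ℕ} (a b : Fin s → ℝ) : Prop :=
  (∀ k : ℕ, k < s → ∀ t : Finset (Fin s), t.card = k →
      ∃ t' : Finset (Fin s), t'.card = k ∧ ∑ i ∈ t, a i ≤ ∑ i ∈ t', b i) ∧
  (∑ i, a i = ∑ i, b i)

/-- Induced energy causality feasibility for the `s` transmitted samples, with
induced energy arrivals `Ebar`: nonnegative powers, cumulative consumed energy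
never exceeds cumulative harvested energy, and all energy is used. -/
def FeasibleBar {s : ℕ} (σx2 : ℝ) (Ebar : Fin s → ℝ) (abar : Fin s → ℝ) : Prop :=
  (∀ r, 0 ≤ abar r) ∧
  (∀ r : Fin s, ∑ l ∈ Finset.Iic r, abar l * σx2 ≤ ∑ l ∈ Finset.Iic r, Ebar l) ∧
  (∑ l, abar l * σx2 = ∑ l, Ebar l)

open Finset in
/-- A lower bound for a weighted sum with antitone weights and nonnegative partial sums. -/
theorem Fin.last_mul_sum_le_sum_mul_of_antitone {n : ℕ} (c d : Fin (n + 1) → ℝ)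
    (hc : Antitone c) (hd : ∀ k, 0 ≤ ∑ i ∈ Iio k, d i) :
    c (Fin.last n) * ∑ i, d i ≤ ∑ i, c i * d i := by
  induction n with
  | zero => simp
  | succ n ih =>
    have hprefix : ∀ k : Fin (n + 1),
        ∑ i ∈ Iio k.castSucc, d i = ∑ i ∈ Iio k, d i.castSucc := fun k => by
      rw [← Fin.map_castSuccEmb_Iio, sum_map]; rfl
    have hlast : 0 ≤ ∑ i : Fin (n + 1), d i.castSucc := by
      have h := hd (Fin.last (n + 1))
      rwa [Fin.Iio_last_eq_map, sum_map] at h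
    have h := ih (fun i => c i.castSucc) (fun i => d i.castSucc)
      (fun i j hij => hc (Fin.castSucc_le_castSucc_iff.mpr hij))
      (fun k => hprefix k ▸ hd k.castSucc)
    have hmul := mul_le_mul_of_nonneg_right (hc (Fin.le_last (Fin.last n).castSucc)) hlast
    rw [Fin.sum_univ_castSucc d, Fin.sum_univ_castSucc fun i => c i * d i, mul_add]
    linarith

open Finset in
/-- Among the sets of a given size, initial segments maximize the sum of an antitone function. -/
theorem Antitone.sum_le_sum_Iio {s : ℕ} {b : Fin s → ℝ} (hb : Antitone b) (k : Fin s)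
    (t : Finset (Fin s)) (ht : t.card = k) : ∑ i ∈ t, b i ≤ ∑ i ∈ Iio k, b i := by
  have h₁ : ∑ i ∈ t, (b i - b k) ≤ ∑ i ∈ t ∩ Iio k, (b i - b k) := by
    rw [← sum_inter_add_sum_sdiff t (Iio k)]
    refine add_le_of_nonpos_right (sum_nonpos fun i hi => sub_nonpos.mpr (hb ?_))
    simpa using (mem_sdiff.mp hi).2
  have h₂ : ∑ i ∈ t ∩ Iio k, (b i - b k) ≤ ∑ i ∈ Iio k, (b i - b k) :=
    sum_le_sum_of_subset_of_nonneg inter_subset_right fun i hi _ =>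
      sub_nonneg.mpr (hb (mem_Iio.mp hi).le)
  have h := h₁.trans h₂
  simpa [sum_sub_distrib, ht] using h

/-- Majorization does not depend on the order of the entries. -/
theorem Majorizes.comp_perm {s : ℕ} {a b : Fin s → ℝ} (h : Majorizes a b)
    (σ τ : Equiv.Perm (Fin s)) : Majorizes (a ∘ σ) (b ∘ τ) := by
  refine ⟨fun k hk t ht => ?_, ?_⟩
  · obtain ⟨t', ht', hle⟩ := h.1 k hk (t.map σ.toEmbedding) (by simpa using ht)
    refine ⟨t'.map τ.symm.toEmbedding, by simpa using ht', ?_⟩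
    simpa [Finset.sum_map] using hle
  · simpa only [Function.comp_apply, Equiv.sum_comp] using h.2

/-- Every real tuple can be rearranged in decreasing order. -/
theorem exists_perm_antitone_comp {s : ℕ} (a : Fin s → ℝ) :
    ∃ σ : Equiv.Perm (Fin s), Antitone (a ∘ σ) :=
  ⟨Tuple.sort (-a), fun _ _ hij => neg_le_neg_iff.mp (Tuple.monotone_sort (-a) hij)⟩

/-- Karamata's inequality for a function with a monotone choice `f'` of subgradients on `S`. -/
theorem Majorizes.sum_le_sum_of_subgradient {s : ℕ} {a b : Fin s → ℝ} (h : Majorizes a b)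
    {S : Set ℝ} (ha : ∀ i, a i ∈ S) (hb : ∀ i, b i ∈ S) {f f' : ℝ → ℝ}
    (hf' : MonotoneOn f' S) (hf : ∀ x ∈ S, ∀ y ∈ S, f x + f' x * (y - x) ≤ f y) :
    ∑ i, f (a i) ≤ ∑ i, f (b i) := by
  obtain ⟨σ, hσ⟩ := exists_perm_antitone_comp a
  obtain ⟨τ, hτ⟩ := exists_perm_antitone_comp b
  obtain ⟨hpart, htot⟩ := h.comp_perm σ τ
  rw [← Equiv.sum_comp σ fun i => f (a i), ← Equiv.sum_comp τ fun i => f (b i)]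
  obtain _ | n := s
  · simp
  have hAbel := Fin.last_mul_sum_le_sum_mul_of_antitone
    (fun i => f' (a (σ i))) (fun i => b (τ i) - a (σ i))
    (fun i j hij => hf' (ha _) (ha _) (hσ hij)) fun k => by
      obtain ⟨t, ht, hle⟩ := hpart k k.isLt (Finset.Iio k) (by simp)
      rw [Finset.sum_sub_distrib, sub_nonneg]
      exact hle.trans (hτ.sum_le_sum_Iio k t ht)
  have hzero : ∑ i, (b (τ i) - a (σ i)) = 0 := by
    rw [Finset.sum_sub_distrib, sub_eq_zero]
    exact htot.symm
  rw [hzero, mul_zero] at hAbel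
  have hsum := Finset.sum_le_sum fun i (_ : i ∈ Finset.univ) =>
    hf (a (σ i)) (ha _) (b (τ i)) (hb _)
  rw [Finset.sum_add_distrib] at hsum
  linarith

/-- Schur-convexity of `∑ i, C / (1 + g * a i)` on nonnegative tuples. -/
theorem Majorizes.sum_div_one_add_mul_le {s : ℕ} {a b : Fin s → ℝ} (h : Majorizes a b)
    (ha : ∀ i, 0 ≤ a i) (hb : ∀ i, 0 ≤ b i) {C g : ℝ} (hC : 0 ≤ C) (hg : 0 ≤ g) :
    ∑ i, C / (1 + g * a i) ≤ ∑ i, C / (1 + g * b i) := by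
  refine h.sum_le_sum_of_subgradient (S := Set.Ici 0) ha hb (f := fun x => C / (1 + g * x))
    (f' := fun x => -(C * g / (1 + g * x) ^ 2)) ?_ ?_
  · intro x (hx : 0 ≤ x) y _ hxy
    have : 0 < 1 + g * x := by positivity
    refine neg_le_neg ?_
    gcongr
  · intro x (hx : 0 ≤ x) y (hy : 0 ≤ y)
    have hu : 0 < 1 + g * x := by positivity
    have hv : 0 < 1 + g * y := by positivity
    have hgap : C / (1 + g * y) - (C / (1 + g * x) + -(C * g / (1 + g * x) ^ 2) * (y - x))
        = C * (g * (y - x)) ^ 2 / ((1 + g * x) ^ 2 * (1 + g * y)) := by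
      field_simp
      ring
    have hnonneg : 0 ≤ C * (g * (y - x)) ^ 2 / ((1 + g * x) ^ 2 * (1 + g * y)) := by
      positivity
    exact sub_nonneg.mp (hgap ▸ hnonneg)

/-- paper's Lemma 7: for a sampled low-pass c.w.s.s. source over
a static channel, the equidistant-sampling error
`ērr(ā) = Σ_r (P_x/s)/(1 + γ σ_x² ā_r)` (with `σ_x² = P_x/n`, `n = Δ·s`) is
Schur-convex; consequently any allocation `ā*` satisfying the induced energy
causality constraints and majorized by every allocation satisfying them
minimizes `ērr` among all such allocations. -/
theorem stmt14 (Δ s : ℕ) (hΔ : 0 < Δ) (hs : 0 < s) (td : ℕ) (htd : td < Δ)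
    (n : ℕ) (hn : n = Δ * s)
    (Px γ : ℝ) (hPx : 0 < Px) (hγ : 0 < γ)
    (σx2 : ℝ) (hσ : σx2 = Px / n)
    (Ebar : Fin s → ℝ) (hEbar : ∀ r, 0 ≤ Ebar r) :
    (∀ abar bbar : Fin s → ℝ, (∀ r, 0 ≤ abar r) → (∀ r, 0 ≤ bbar r) →
      Majorizes abar bbar →
      ∑ r, (Px / s) / (1 + γ * σx2 * abar r)
        ≤ ∑ r, (Px / s) / (1 + γ * σx2 * bbar r))
    ∧ (∀ astar : Fin s → ℝ, FeasibleBar σx2 Ebar astar →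
        (∀ bbar : Fin s → ℝ, FeasibleBar σx2 Ebar bbar → Majorizes astar bbar) →
        ∀ bbar : Fin s → ℝ, FeasibleBar σx2 Ebar bbar →
          ∑ r, (Px / s) / (1 + γ * σx2 * astar r)
            ≤ ∑ r, (Px / s) / (1 + γ * σx2 * bbar r)) := by
  have hσ0 : 0 ≤ σx2 := by rw [hσ]; positivity
  have hschur : ∀ abar bbar : Fin s → ℝ, (∀ r, 0 ≤ abar r) → (∀ r, 0 ≤ bbar r) →
      Majorizes abar bbar →
      ∑ r, (Px / s) / (1 + γ * σx2 * abar r) ≤ ∑ r, (Px / s) / (1 + γ * σx2 * bbar r) :=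
    fun _ _ ha hb h => h.sum_div_one_add_mul_le ha hb (by positivity) (by positivity)
  exact ⟨hschur, fun astar ha hmaj bbar hb => hschur astar bbar ha.1 hb.1 (hmaj bbar hb)⟩
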